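/- arXiv:1004.2460 — 5 statements merged into one kernel-verified Lean document; each statement's English description precedes it below -/
import Mathlib

section
/- For every finite subset S of ℤ², Picker has a winning strategy in the Chooser-Picker game on the hypergraph whose vertex set is S and whose winning sets are all 7-in-a-row winning sets that are entirely contained in S. -/
/-!
The plane is tiled by `8 × 4` rectangles, and Picker plays one tile after the other.  Inside a tile
he prevents Chooser from completing any of 32 *critical sets* (`critical`): the columns, the two
halves of each row, the ten diagonals of length four, and, near the two vertical sides, four
diagonal triples and two diagonal pairs.  Each 7-in-a-row contains a critical set of some tile
(`exists_critical_subset`), a check over the 32 positions of its first cell modulo the tiling and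
the four directions.

That Picker wins the game on a single tile is witnessed by an explicit decision tree (`strategy`),
whose leaves are pairing strategies.  `Strategy.check` tests such a tree while keeping track of the
sets that Chooser can still complete, and `pickerWins_of_check` shows that the test is sound.

The rest is a monotonicity principle (`PickerWins.mono`): Picker still wins when vertices are deleted
from the board, together with the winning sets meeting them, and also when some vertices already
granted to Chooser are in fact still open.  It yields the passage from single tiles to a union of
tiles (`pickerWins_union`), and from a union of tiles to an arbitrary finite subset of the plane.
-/

/-- `PickerWins F rem ch` states that Picker has a winning strategy in the
Chooser-Picker game with winning sets `F`, when `rem` is the set of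
as-yet-unselected vertices and `ch` is the set of vertices Chooser has taken
so far.  In each round Picker offers two unselected vertices, Chooser keeps
one and the other goes to Picker; if an odd number of vertices remain, the
last one goes to Chooser.  Picker wins iff at the end Chooser's set contains
no winning set `A ∈ F`. -/
inductive PickerWins {α : Type*} [DecidableEq α] (F : Set (Finset α)) :
    Finset α → Finset α → Prop
  | endEven (ch : Finset α) (hw : ∀ A ∈ F, ¬ A ⊆ ch) :
      PickerWins F ∅ ch
  | endOdd (x : α) (ch : Finset α) (hw : ∀ A ∈ F, ¬ A ⊆ insert x ch) :
      PickerWins F {x} ch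
  | step (rem ch : Finset α) (x y : α) (hx : x ∈ rem) (hy : y ∈ rem) (hxy : x ≠ y)
      (h1 : PickerWins F ((rem.erase x).erase y) (insert x ch))
      (h2 : PickerWins F ((rem.erase x).erase y) (insert y ch)) :
      PickerWins F rem ch

/-- Picker has a winning strategy in the Chooser-Picker game on the finite
hypergraph with vertex set `V` and family of winning sets `F`. -/
def PickerWinsGame {α : Type*} [DecidableEq α] (V : Finset α) (F : Set (Finset α)) : Prop :=
  PickerWins F V ∅

/-- A 7-in-a-row winning set in ℤ²: 7 consecutive cells on a horizontal,
vertical or diagonal line. -/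
def SevenInARow (A : Finset (ℤ × ℤ)) : Prop :=
  ∃ v d : ℤ × ℤ, d ∈ ({(1, 0), (0, 1), (1, 1), (1, -1)} : Set (ℤ × ℤ)) ∧
    A = (Finset.range 7).image (fun i : ℕ => (v.1 + (i : ℤ) * d.1, v.2 + (i : ℤ) * d.2))

/-! ### Monotonicity and disjoint unions -/

/-- If Chooser would not win even by taking all of `U`, then any play is good for Picker; `n` is a
bound for an induction on the number of open vertices. -/
theorem pickerWins_of_forall_not_subset {α : Type*} [DecidableEq α] {F : Set (Finset α)} (n : ℕ) :
    ∀ U C : Finset α, U.card ≤ n → (∀ A ∈ F, ¬ A ⊆ U ∪ C) → PickerWins F U C := by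
  induction n with
  | zero =>
    intro U C hU h
    obtain rfl : U = ∅ := by simpa using hU
    exact .endEven C (by simpa using h)
  | succ n ih =>
    intro U C hU h
    rcases Nat.lt_or_ge U.card 2 with h2 | h2
    · rcases Nat.lt_or_ge U.card 1 with h1 | h1
      · obtain rfl : U = ∅ := by simpa using h1
        exact .endEven C (by simpa using h)
      · obtain ⟨x, rfl⟩ := Finset.card_eq_one.mp (by omega : U.card = 1)
        exact .endOdd x C (by simpa only [← Finset.insert_eq] using h)
    · obtain ⟨x, hx, y, hy, hxy⟩ := Finset.one_lt_card.mp h2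
      have hcard : ((U.erase x).erase y).card ≤ n := by
        have := Finset.card_le_card (Finset.erase_subset y (U.erase x))
        have := Finset.card_erase_lt_of_mem hx
        omega
      refine .step U C x y hx hy hxy (ih _ _ hcard ?_) (ih _ _ hcard ?_) <;>
      · intro A hA hsub
        refine h A hA (hsub.trans ?_)
        intro z
        simp only [Finset.mem_union, Finset.mem_erase, Finset.mem_insert]
        rintro (⟨-, -, hz⟩ | rfl | hz) <;> tauto

/-- Monotonicity in the winning sets and in the position.  In the new position, the vertices of `U`
outside `R` are those which the old position grants to Chooser but which are still open: Picker
leaves them to the end, pretending that Chooser owns them.  When the old strategy offers a pair with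
a missing vertex, Picker pretends that Chooser took the other one. -/
theorem PickerWins.mono {α : Type*} [DecidableEq α] {F F' : Set (Finset α)}
    (hF : ∀ A ∈ F', ∃ B ∈ F, B ⊆ A) {R C : Finset α} (h : PickerWins F R C) :
    ∀ U C' : Finset α, U ⊆ R ∪ C → C' ⊆ C → PickerWins F' U C' := by
  induction h with
  | endEven C hw =>
    intro U C' hU hC
    refine pickerWins_of_forall_not_subset _ U C' le_rfl fun A hA hsub => ?_
    obtain ⟨B, hB, hBA⟩ := hF A hA
    refine hw B hB (hBA.trans (hsub.trans (Finset.union_subset ?_ hC)))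
    simpa using hU
  | endOdd x C hw =>
    intro U C' hU hC
    refine pickerWins_of_forall_not_subset _ U C' le_rfl fun A hA hsub => ?_
    obtain ⟨B, hB, hBA⟩ := hF A hA
    refine hw B hB (hBA.trans (hsub.trans (Finset.union_subset ?_ ?_)))
    · rwa [Finset.insert_eq]
    · exact hC.trans (Finset.subset_insert _ _)
  | step R C x y hx hy hxy _ _ ih1 ih2 =>
    intro U C' hU hC
    by_cases hxU : x ∈ U
    · by_cases hyU : y ∈ U
      · refine .step U C' x y hxU hyU hxy (ih1 _ _ ?_ ?_) (ih2 _ _ ?_ ?_)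
        · intro z hz; have := @hU z; grind
        · exact Finset.insert_subset_insert _ hC
        · intro z hz; have := @hU z; grind
        · exact Finset.insert_subset_insert _ hC
      · refine ih1 U C' ?_ (hC.trans (Finset.subset_insert _ _))
        intro z hz; have := @hU z; grind
    · refine ih2 U C' ?_ (hC.trans (Finset.subset_insert _ _))
      intro z hz; have := @hU z; grind

/-- The second half of a game on a disjoint union: the play on the first board is over and left
Chooser with a set `D` meeting no set of `F₂`. -/
theorem PickerWins.add_chooser {α : Type*} [DecidableEq α] {F₁ F₂ : Set (Finset α)}
    {R C : Finset α} (h : PickerWins F₂ R C) {D : Finset α}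
    (hD : ∀ B ∈ F₂, Disjoint B D)
    (h1 : ∀ B ∈ F₁, ¬ B ⊆ D ∪ (R ∪ C)) : PickerWins (F₁ ∪ F₂) R (C ∪ D) := by
  induction h with
  | endEven C hw =>
    refine .endEven _ ?_
    rintro B (hB | hB) hsub
    · exact h1 B hB (by grind)
    · exact hw B hB (by have := Finset.disjoint_left.mp (hD B hB); grind)
  | endOdd x C hw =>
    refine .endOdd x _ ?_
    rintro B (hB | hB) hsub
    · exact h1 B hB (by grind)
    · exact hw B hB (by have := Finset.disjoint_left.mp (hD B hB); grind)
  | step R C x y hx hy hxy _ _ ih1 ih2 =>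
    refine .step R _ x y hx hy hxy ?_ ?_
    · rw [← Finset.insert_union]
      refine ih1 fun B hB hsub => h1 B hB (hsub.trans fun z => ?_)
      grind
    · rw [← Finset.insert_union]
      refine ih2 fun B hB hsub => h1 B hB (hsub.trans fun z => ?_)
      grind

/-- Picker wins on a disjoint union of two boards if he wins on each of them: he plays first on one
board, then on the other, leaving a possible odd vertex of the first board to the very end.
On the first board the game may already have begun. -/
theorem pickerWins_union {α : Type*} [DecidableEq α] {F₁ F₂ : Set (Finset α)}
    {R C V : Finset α} (h : PickerWins F₁ R C) (hV : PickerWins F₂ V ∅)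
    (hdisj : Disjoint (R ∪ C) V) (h1 : ∀ B ∈ F₁, Disjoint B V)
    (h2 : ∀ B ∈ F₂, Disjoint B (R ∪ C)) : PickerWins (F₁ ∪ F₂) (R ∪ V) C := by
  induction h with
  | endEven C hw =>
    have := hV.add_chooser (F₁ := F₁) (D := C) (by simpa using h2) (fun B hB hsub => hw B hB (by
      have := Finset.disjoint_left.mp (h1 B hB); grind))
    simpa using this
  | endOdd x C hw =>
    have := hV.add_chooser (F₁ := F₁) (D := insert x C)
      (by simpa only [← Finset.insert_eq] using h2) (fun B hB hsub => hw B hB (by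
        have := Finset.disjoint_left.mp (h1 B hB); grind))
    refine this.mono (fun A hA => ⟨A, hA, subset_rfl⟩) _ _ ?_ ?_ <;> grind
  | step R C x y hx hy hxy _ _ ih1 ih2 =>
    have hd := Finset.disjoint_left.mp hdisj
    have hrem : ((R ∪ V).erase x).erase y = (R.erase x).erase y ∪ V := by
      have := @hd x (by grind)
      have := @hd y (by grind)
      grind
    refine .step _ _ x y (by grind) (by grind) hxy ?_ ?_
    · rw [hrem]
      refine ih1 (hdisj.mono_left fun z => by grind) fun B hB => (h2 B hB).mono_right fun z => ?_
      grind
    · rw [hrem]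
      refine ih2 (hdisj.mono_left fun z => by grind) fun B hB => (h2 B hB).mono_right fun z => ?_
      grind

theorem PickerWins.map {α β : Type*} [DecidableEq α] [DecidableEq β] (f : α ↪ β)
    {F : Set (Finset α)} {R C : Finset α} (h : PickerWins F R C) :
    PickerWins (Set.image (fun A => A.map f) F) (R.map f) (C.map f) := by
  induction h with
  | endEven C hw =>
    refine .endEven _ ?_
    rintro _ ⟨A, hA, rfl⟩ hsub
    exact hw A hA (Finset.map_subset_map.mp hsub)
  | endOdd x C hw =>
    rw [Finset.map_singleton]
    refine .endOdd _ _ ?_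
    rintro _ ⟨A, hA, rfl⟩ hsub
    rw [← Finset.map_insert] at hsub
    exact hw A hA (Finset.map_subset_map.mp hsub)
  | step R C x y hx hy hxy _ _ ih1 ih2 =>
    simp only [Finset.map_erase, Finset.map_insert] at ih1 ih2
    exact .step _ _ (f x) (f y) (Finset.mem_map_of_mem f hx) (Finset.mem_map_of_mem f hy)
      (f.injective.ne hxy) ih1 ih2

/-! ### Decision trees for Picker -/

/-- A strategy of Picker on a board whose vertices are natural numbers. -/
inductive Strategy
  /-- Offer `x` and `y`; continue with `s` if Chooser keeps `x`, with `t` if he keeps `y`. -/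
  | offer (x y : ℕ) (s t : Strategy)
  /-- Offer the first and second vertex of the list, then the third and fourth, and so on,
  whatever Chooser replies; the remaining vertices are played arbitrarily. -/
  | pairs (l : List ℕ)

/-- Delete two vertices from the list of open vertices. -/
def remove (x y : ℕ) (R : List ℕ) : List ℕ :=
  R.filter fun z => !(Nat.beq z x || Nat.beq z y)

/-- Both vertices are open, and they are distinct. -/
def canOffer (x y : ℕ) (R : List ℕ) : Bool :=
  R.any (Nat.beq x) && R.any (Nat.beq y) && !Nat.beq x y

/-- Update of the list of sets still dangerous to Picker, reduced to what Chooser is missing of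
them, after Chooser gets `x` and Picker gets `y`. -/
def update (x y : ℕ) (L : List (List ℕ)) : List (List ℕ) :=
  (L.filter fun l => !l.any (Nat.beq y)).map fun l => l.filter fun z => !Nat.beq z x

/-- Does the pairing given by consecutive entries of the list, all of them in `R`, meet each set of
`L` in a full pair? -/
def checkPairs : List ℕ → List ℕ → List (List ℕ) → Bool
  | x :: y :: ps, R, L => canOffer x y R &&
      checkPairs ps (remove x y R) (L.filter fun l => !(l.any (Nat.beq x) && l.any (Nat.beq y)))
  | _, _, L => L.isEmpty

/-- Does the strategy prevent Chooser from completing a set of `L`, when `R` is the list of open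
vertices? -/
def Strategy.check : Strategy → List ℕ → List (List ℕ) → Bool
  | .offer x y s t, R, L => canOffer x y R &&
      s.check (remove x y R) (update x y L) && t.check (remove x y R) (update y x L)
  | .pairs ps, R, L => checkPairs ps R L

theorem beq_eq_false_iff (x y : ℕ) : Nat.beq x y = false ↔ x ≠ y := by
  rw [← Bool.not_eq_true, Nat.beq_eq]

theorem any_beq_iff (x : ℕ) (R : List ℕ) : R.any (Nat.beq x) = true ↔ x ∈ R := by
  simp [List.any_eq_true]

theorem toFinset_remove (x y : ℕ) (R : List ℕ) :
    (remove x y R).toFinset = (R.toFinset.erase x).erase y := by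
  ext z
  simp only [remove, List.mem_toFinset, List.mem_filter, Finset.mem_erase, Bool.not_eq_true',
    Bool.or_eq_false_iff, beq_eq_false_iff]
  tauto

theorem canOffer_iff (x y : ℕ) (R : List ℕ) :
    canOffer x y R = true ↔ x ∈ R.toFinset ∧ y ∈ R.toFinset ∧ x ≠ y := by
  simp only [canOffer, Bool.and_eq_true, any_beq_iff, List.mem_toFinset, Bool.not_eq_true',
    beq_eq_false_iff, and_assoc]

/-- The invariant relating a position (`R` open, `C` taken by Chooser) to the list `L` kept by the
checker: each winning set free of Picker's vertices contains a member of `L`. -/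
def Tracks (F : Set (Finset ℕ)) (R C : Finset ℕ) (L : List (List ℕ)) : Prop :=
  ∀ A ∈ F, A ⊆ R ∪ C → ∃ l ∈ L, ∀ v ∈ l, v ∈ A

theorem Tracks.update {F : Set (Finset ℕ)} {R C : Finset ℕ} {L : List (List ℕ)}
    (h : Tracks F R C L) (hdisj : Disjoint R C) {x y : ℕ} (hx : x ∈ R) (hy : y ∈ R) (hxy : x ≠ y) :
    Tracks F ((R.erase x).erase y) (insert x C) (update x y L) := by
  intro A hA hsub
  have hyC := Finset.disjoint_left.mp hdisj hy
  obtain ⟨l, hl, hlA⟩ := h A hA (hsub.trans fun z => by grind)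
  have hyA : y ∉ A := fun hyA => by have := hsub hyA; grind
  refine ⟨l.filter fun z => !Nat.beq z x, List.mem_map.mpr ⟨l, ?_, rfl⟩, fun v hv =>
    hlA v (List.mem_of_mem_filter hv)⟩
  rw [List.mem_filter, Bool.not_eq_true', ← Bool.not_eq_true, any_beq_iff]
  exact ⟨hl, fun hyl => hyA (hlA y hyl)⟩

theorem Tracks.pair {F : Set (Finset ℕ)} {R C : Finset ℕ} {L : List (List ℕ)}
    (h : Tracks F R C L) (hdisj : Disjoint R C) {x y u w : ℕ}
    (hu : u ∈ R) (hw : w ∈ R) (huw : u ≠ w) (hset : x = u ∧ y = w ∨ x = w ∧ y = u) :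
    Tracks F ((R.erase x).erase y) (insert u C)
      (L.filter fun l => !(l.any (Nat.beq x) && l.any (Nat.beq y))) := by
  intro A hA hsub
  have hwC := Finset.disjoint_left.mp hdisj hw
  obtain ⟨l, hl, hlA⟩ := h A hA (hsub.trans fun z => by grind)
  have hwA : w ∉ A := fun hwA => by have := hsub hwA; grind
  refine ⟨l, ?_, hlA⟩
  rw [List.mem_filter, Bool.not_eq_true', ← Bool.not_eq_true, Bool.and_eq_true, any_beq_iff,
    any_beq_iff]
  refine ⟨hl, fun hxy => hwA (hlA w ?_)⟩
  rcases hset with ⟨rfl, rfl⟩ | ⟨rfl, rfl⟩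
  exacts [hxy.2, hxy.1]

theorem disjoint_step {R C : Finset ℕ} (hdisj : Disjoint R C) (x y u : ℕ) (hu : u = x ∨ u = y) :
    Disjoint ((R.erase x).erase y) (insert u C) := by
  rw [Finset.disjoint_left] at hdisj ⊢
  intro z hz
  have := @hdisj z
  grind

theorem pickerWins_of_checkPairs {F : Set (Finset ℕ)} (ps R : List ℕ) (L : List (List ℕ)) :
    ∀ C : Finset ℕ, Disjoint R.toFinset C → Tracks F R.toFinset C L → checkPairs ps R L = true →
      PickerWins F R.toFinset C := by
  fun_induction checkPairs ps R L with
  | case1 x y ps R L ih =>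
    intro C hdisj hT hc
    rw [Bool.and_eq_true, canOffer_iff] at hc
    obtain ⟨⟨hx, hy, hxy⟩, hc⟩ := hc
    rw [toFinset_remove] at ih
    exact .step _ _ x y hx hy hxy
      (ih _ (disjoint_step hdisj x y x (.inl rfl))
        (hT.pair hdisj hx hy hxy (.inl ⟨rfl, rfl⟩)) hc)
      (ih _ (disjoint_step hdisj x y y (.inr rfl))
        (hT.pair hdisj hy hx hxy.symm (.inr ⟨rfl, rfl⟩)) hc)
  | case2 ps R L _ =>
    intro C _ hT hc
    refine pickerWins_of_forall_not_subset _ _ _ le_rfl fun A hA hsub => ?_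
    obtain ⟨l, hl, -⟩ := hT A hA hsub
    rw [List.isEmpty_iff.mp hc] at hl
    exact absurd hl List.not_mem_nil

theorem pickerWins_of_check {F : Set (Finset ℕ)} (s : Strategy) :
    ∀ (R : List ℕ) (L : List (List ℕ)) (C : Finset ℕ), Disjoint R.toFinset C →
      Tracks F R.toFinset C L → s.check R L = true → PickerWins F R.toFinset C := by
  induction s with
  | offer x y s t ihs iht =>
    intro R L C hdisj hT hc
    rw [Strategy.check, Bool.and_eq_true, Bool.and_eq_true, canOffer_iff] at hc
    obtain ⟨⟨⟨hx, hy, hxy⟩, hs⟩, ht⟩ := hc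
    refine .step _ _ x y hx hy hxy ?_ ?_
    · rw [← toFinset_remove]
      refine ihs _ _ _ ?_ ?_ hs <;> rw [toFinset_remove]
      · exact disjoint_step hdisj x y x (.inl rfl)
      · exact hT.update hdisj hx hy hxy
    · rw [← toFinset_remove]
      refine iht _ _ _ ?_ ?_ ht <;> rw [toFinset_remove]
      · exact disjoint_step hdisj x y y (.inr rfl)
      · rw [Finset.erase_right_comm]
        exact hT.update hdisj hy hx hxy.symm
  | pairs ps =>
    intro R L C hdisj hT hc
    exact pickerWins_of_checkPairs ps R L C hdisj hT hc

/-! ### The game on one tile -/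

/-- The winning sets of the game on the `8 × 4` tile, the cell in column `c` and row `r` being
numbered `8 * r + c`. -/
def critical : List (List ℕ) :=
  [ -- columns
    [0, 8, 16, 24], [1, 9, 17, 25], [2, 10, 18, 26], [3, 11, 19, 27],
    [4, 12, 20, 28], [5, 13, 21, 29], [6, 14, 22, 30], [7, 15, 23, 31],
    -- half rows
    [0, 1, 2, 3], [4, 5, 6, 7], [8, 9, 10, 11], [12, 13, 14, 15],
    [16, 17, 18, 19], [20, 21, 22, 23], [24, 25, 26, 27], [28, 29, 30, 31],
    -- diagonals through all four rows
    [0, 9, 18, 27], [1, 10, 19, 28], [2, 11, 20, 29], [3, 12, 21, 30], [4, 13, 22, 31],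
    [3, 10, 17, 24], [4, 11, 18, 25], [5, 12, 19, 26], [6, 13, 20, 27], [7, 14, 21, 28],
    -- parts of the diagonals that cross the left or right side of the tile
    [16, 25], [8, 17, 26], [5, 14, 23], [23, 30], [15, 22, 29], [2, 9, 16]]

/-- A winning strategy of Picker for the sets `critical`. -/
def strategy : Strategy :=
  .offer 16 25 (.offer 2 9 (.offer 23 30 (.offer 5 14 (.offer 21 22 (.offer 13 29 (.offer 19 26
  (.offer 17 18 (.offer 1 10 (.pairs [0,3,8,24,11,27,6,20,4,7,15,31,12,28]) (.pairs
  [3,24,0,8,11,27,6,20,4,7,15,31,12,28])) (.pairs [0,1,8,24,10,28,4,7,15,31,12,20,6,27,3,11]))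
  (.offer 8 17 (.pairs [10,18,0,24,1,3,4,6,20,27,12,28,7,15]) (.pairs
  [10,18,3,24,0,1,4,6,20,27,12,28,7,15]))) (.offer 11 20 (.offer 10 18 (.offer 0 8 (.offer 1 3
  (.pairs [19,28,12,26,4,6,7,15]) (.pairs [17,24,19,27,12,26,4,6,7,15])) (.offer 17 26 (.pairs
  [3,24,19,27,1,28,4,6,7,15]) (.pairs [12,19,3,27,1,28,4,6,7,15]))) (.offer 17 19 (.pairs
  [8,26,0,24,1,3,4,6,7,15]) (.pairs [12,26,3,27,0,1,8,24,4,6,7,15]))) (.offer 1 3 (.offer 19 26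
  (.pairs [17,18,10,28,4,12,6,7,15,31,0,8]) (.pairs [8,17,10,18,0,24,4,6,12,28,7,15])) (.offer 17
  26 (.pairs [18,19,10,24,0,8,4,6,12,28,7,15]) (.pairs [10,18,12,19,4,28,6,7,15,31,0,8])))))
  (.offer 15 29 (.offer 7 31 (.offer 4 6 (.offer 1 3 (.offer 19 26 (.pairs [17,18,10,28,12,20,0,8])
  (.pairs [8,17,10,18,0,24,12,20])) (.offer 17 26 (.pairs [18,19,10,24,0,8,11,27,12,20]) (.pairs
  [10,18,12,19,11,27,20,28,0,8]))) (.offer 8 17 (.pairs [0,24,1,3,10,18,19,28,12,26,11,27,13,20])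
  (.offer 18 19 (.pairs [10,26,3,24,0,1,13,20]) (.pairs [12,26,0,1,10,28,3,24,11,27,13,20]))))
  (.offer 4 13 (.offer 1 3 (.offer 19 26 (.pairs [17,18,10,28,12,20,0,8]) (.pairs
  [8,17,10,18,0,24,12,20])) (.offer 17 26 (.pairs [18,19,10,24,0,8,11,27,12,20]) (.pairs
  [10,18,12,19,11,27,20,28,0,8]))) (.offer 8 17 (.pairs [0,24,1,3,10,18,19,28,12,26,11,27,6,20])
  (.offer 18 19 (.pairs [10,26,3,24,0,1,6,20]) (.pairs [12,26,0,1,10,28,3,24,11,27,6,20])))))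
  (.offer 11 20 (.offer 10 18 (.offer 0 8 (.offer 1 3 (.pairs [19,28,12,26,6,7,4,13]) (.pairs
  [17,24,19,27,12,26,6,7,4,13])) (.offer 17 26 (.pairs [3,24,19,27,1,28,6,7,4,13]) (.pairs
  [12,19,3,27,1,28,6,7,4,13]))) (.offer 17 19 (.pairs [8,26,0,24,1,3,6,7,4,13]) (.pairs
  [12,26,3,27,0,1,8,24,6,7,4,13]))) (.offer 12 28 (.offer 19 26 (.pairs
  [17,18,0,1,8,24,3,10,4,7,13,31,6,27]) (.offer 8 17 (.pairs [10,18,0,24,1,3,4,7,13,31,6,27])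
  (.pairs [10,18,3,24,0,1,4,7,13,31,6,27]))) (.offer 10 17 (.pairs
  [1,19,18,26,0,3,8,24,4,7,13,31,6,27]) (.pairs [18,19,8,26,0,24,1,3,4,7,13,31,6,27])))))) (.offer
  18 26 (.offer 17 19 (.offer 15 22 (.pairs [12,13,7,31,21,28,4,20,11,29,6,27,0,1,8,24,3,10])
  (.pairs [20,21,7,28,11,29,4,12,13,31,6,27,0,1,8,24,3,10])) (.offer 22 29 (.offer 20 21 (.offer 4
  12 (.pairs [13,31,6,27,3,11,0,1,8,24,10,28,7,15]) (.pairs [13,15,6,27,3,11,0,1,8,24,10,28,7,31]))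
  (.offer 7 28 (.offer 15 31 (.pairs [12,13,0,1,8,24,3,11]) (.pairs [4,13,0,1,8,24,3,11])) (.pairs
  [1,10,0,3,8,24,11,27,12,15,4,13]))) (.offer 11 20 (.pairs [3,27,0,1,8,24,10,28,7,21,15,31,12,13])
  (.pairs [0,3,8,24,12,13,6,27,4,28,1,10,7,21,15,31])))) (.offer 8 17 (.offer 0 24 (.offer 1 3
  (.offer 15 22 (.pairs [12,13,7,31,21,28,10,19,4,20,11,29,6,27]) (.pairs
  [20,21,7,28,10,19,11,29,4,12,13,31,6,27])) (.offer 15 22 (.offer 12 13 (.pairs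
  [7,31,21,28,4,20,11,29,19,27]) (.pairs [7,31,21,28,11,19,20,29,6,27])) (.offer 20 21 (.pairs
  [11,29,19,27,6,13,4,31,12,28]) (.pairs [7,28,11,19,4,13])))) (.offer 15 22 (.pairs
  [12,13,7,31,21,28,4,20,11,29,6,27,3,19,1,10]) (.pairs
  [20,21,7,28,11,29,4,12,13,31,6,27,3,19,1,10]))) (.offer 11 29 (.offer 7 28 (.pairs
  [15,31,12,13,4,22,20,21,6,27,3,19,0,1,10,24]) (.offer 3 19 (.pairs
  [0,1,10,24,12,15,4,20,21,22,13,31,6,27]) (.pairs [1,10,12,15,4,20,21,22,13,31,6,27]))) (.offer 15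
  22 (.pairs [12,13,7,31,21,28,4,20,6,27,0,1,10,19,3,24]) (.pairs
  [20,21,7,28,4,12,13,31,6,27,0,1,10,19,3,24])))))) (.offer 12 21 (.offer 28 29 (.offer 4 20
  (.offer 19 26 (.offer 1 10 (.pairs [0,3,17,18,8,24,11,27,5,7,13,15,22,31,6,14]) (.pairs
  [17,18,3,24,0,8,11,27,5,7,13,15,22,31,6,14])) (.offer 8 17 (.pairs
  [10,18,0,24,1,3,5,7,13,15,22,31,6,14]) (.pairs [10,18,3,24,0,1,5,7,13,15,22,31,6,14]))) (.offer
  10 18 (.offer 1 19 (.offer 0 3 (.pairs [8,24,17,26,13,15,6,27,14,22]) (.pairs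
  [17,24,8,26,13,15,6,27,14,22])) (.offer 5 26 (.pairs [13,15,6,27,14,22,3,11,17,24,0,8]) (.offer 8
  17 (.pairs [0,24,13,15,6,27,14,22,3,11]) (.offer 3 24 (.offer 11 27 (.pairs [13,15,6,14]) (.offer
  6 13 (.pairs [14,22]) (.pairs [14,15]))) (.pairs [13,15,6,27,14,22]))))) (.offer 17 19 (.pairs
  [8,26,0,24,1,3,13,15,6,27,14,22]) (.pairs [5,26,0,1,8,24,13,15,6,27,14,22,3,11])))) (.offer 11 20
  (.offer 15 22 (.offer 13 14 (.offer 8 17 (.pairs [0,24,1,3,19,27,5,26,10,18,4,6]) (.offer 18 19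
  (.pairs [10,26,3,24,0,1,4,5]) (.pairs [5,26,3,27,0,1,10,24,4,6]))) (.offer 8 17 (.pairs
  [0,24,1,3,19,27,5,26,10,18,4,6]) (.offer 18 19 (.pairs [10,26,3,24,0,1,4,5]) (.pairs
  [5,26,3,27,0,1,10,24,4,6])))) (.offer 6 14 (.offer 8 17 (.pairs
  [0,24,1,3,19,27,5,26,4,7,10,18,13,31]) (.offer 18 19 (.pairs [10,26,3,24,0,1,5,7,4,13]) (.pairs
  [5,26,3,27,0,1,4,7,10,24,13,31]))) (.offer 8 17 (.pairs [0,24,1,3,19,27,5,26,10,18,4,13]) (.offer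
  18 19 (.pairs [10,26,3,24,0,1,4,13]) (.pairs [5,26,3,27,0,1,10,24,4,13]))))) (.offer 15 22
  (.offer 13 14 (.offer 6 27 (.offer 17 26 (.pairs [18,19,0,1,8,24,3,10,4,5]) (.pairs
  [10,18,5,19,4,7,1,3,0,8])) (.offer 17 26 (.pairs [18,19,0,1,8,24,3,10]) (.pairs
  [10,18,5,19,1,3,0,8]))) (.offer 17 26 (.pairs [18,19,0,1,8,24,3,10,4,5]) (.pairs
  [10,18,5,19,1,3,0,8,4,6]))) (.offer 6 14 (.offer 13 27 (.offer 4 31 (.offer 5 7 (.offer 19 26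
  (.pairs [17,18,0,1,8,24,3,10]) (.offer 8 17 (.pairs [10,18,0,24,1,3]) (.pairs [10,18,3,24,0,1])))
  (.offer 8 26 (.pairs [0,24,1,3,10,17,18,19]) (.pairs [10,18,17,19,3,24,0,1]))) (.offer 17 26
  (.pairs [18,19,0,1,8,24,3,10]) (.pairs [10,18,5,19,1,3,0,8]))) (.offer 17 26 (.pairs
  [18,19,0,1,8,24,3,10,4,5]) (.pairs [10,18,5,19,4,7,1,3,0,8]))) (.offer 17 26 (.pairs
  [18,19,0,1,8,24,3,10,4,13]) (.pairs [10,18,5,19,1,3,0,8,4,13])))))) (.offer 8 26 (.offer 0 24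
  (.offer 1 3 (.offer 22 29 (.pairs [6,14,7,28,10,19,17,18,4,5,13,31,20,27]) (.offer 5 13 (.pairs
  [11,20,28,31,7,14,4,6,10,19,17,18]) (.pairs [11,20,28,31,6,27,7,14,10,19,17,18]))) (.offer 6 14
  (.offer 13 29 (.pairs [20,27,11,19,17,18,5,7,4,22]) (.pairs [11,20,15,22,28,31,19,27,17,18,4,5]))
  (.offer 7 28 (.pairs [17,18,19,27,5,13,11,20,15,29,4,22]) (.offer 29 31 (.pairs
  [5,13,11,20,15,22,19,27,17,18]) (.pairs [17,18,4,13,11,19]))))) (.offer 3 10 (.offer 6 14 (.offer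
  13 29 (.pairs [20,27,11,19,17,18,5,7,4,22]) (.pairs [11,20,15,22,28,31,19,27,17,18,4,5])) (.offer
  7 28 (.pairs [17,18,19,27,5,13,11,20,15,29,4,22]) (.offer 29 31 (.pairs
  [5,13,11,20,15,22,19,27,17,18]) (.pairs [17,18,4,13,11,19])))) (.offer 22 29 (.pairs
  [6,14,7,28,1,19,17,18,4,5,13,31,20,27]) (.offer 5 13 (.pairs [11,20,28,31,7,14,4,6,1,19,17,18])
  (.pairs [11,20,28,31,6,27,7,14,1,19,17,18]))))) (.offer 10 18 (.offer 11 20 (.offer 4 7 (.offer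
  29 31 (.pairs [5,13,15,22,6,14,0,1,19,28,3,27,17,24]) (.pairs [13,22,6,14,0,1,19,28,3,27,17,24]))
  (.offer 14 28 (.pairs [6,22,15,29,5,13,0,1,17,24,3,19]) (.offer 1 19 (.pairs
  [0,3,29,31,17,24,5,13,15,22]) (.pairs [3,27,29,31,17,24,5,13,15,22])))) (.offer 22 29 (.offer 6
  14 (.pairs [13,27,4,31,5,7,0,1,19,28,3,17]) (.pairs [7,28,1,19,0,3,17,24,4,13])) (.offer 5 13
  (.pairs [28,31,7,14,4,6,1,19,0,3,17,24]) (.pairs [6,27,28,31,7,14,1,19,0,3,17,24])))) (.offer 17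
  19 (.offer 22 29 (.pairs [6,14,7,28,4,5,13,31,20,27,0,1]) (.offer 5 13 (.pairs
  [11,20,28,31,7,14,4,6,0,1]) (.pairs [11,20,28,31,6,27,7,14,0,1]))) (.offer 6 14 (.offer 13 29
  (.pairs [20,27,3,11,0,1,5,7,4,22]) (.pairs [11,20,15,22,28,31,3,27,0,1,4,5])) (.offer 7 28
  (.pairs [0,1,3,27,5,13,11,20,15,29,4,22]) (.offer 29 31 (.pairs [5,13,11,20,15,22,3,27,0,1])
  (.pairs [0,1,4,13,3,11]))))))))) (.offer 23 30 (.offer 5 14 (.offer 21 29 (.offer 20 22 (.offer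
  17 26 (.offer 18 19 (.offer 0 27 (.offer 8 24 (.pairs [10,11,4,6,12,28,7,15]) (.pairs
  [3,10,4,6,12,28,7,15])) (.pairs [6,13,4,7,12,28,15,31,8,11,3,10])) (.offer 3 11 (.pairs
  [10,24,0,8,1,28,4,12,6,7,13,27,15,31]) (.pairs [8,10,0,24,1,28,4,12,6,7,13,27,15,31]))) (.offer
  12 19 (.pairs [4,28,6,7,13,27,0,18,8,24,10,11,15,31]) (.pairs
  [4,7,15,31,8,10,0,24,18,27,3,11,6,13,1,28]))) (.offer 8 17 (.pairs
  [10,11,0,24,18,27,3,19,12,26,1,28,4,6,13,31,7,15]) (.pairs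
  [18,19,12,26,0,27,3,11,10,24,1,28,4,6,13,31,7,15]))) (.offer 15 22 (.offer 7 31 (.offer 4 6
  (.offer 8 17 (.offer 10 11 (.pairs [0,24,18,27,12,26,20,28,1,19]) (.pairs
  [0,24,18,27,3,19,12,26,20,28])) (.offer 18 19 (.pairs [0,27,3,10,12,20]) (.pairs
  [12,26,20,28,1,10,3,24,11,27]))) (.offer 8 17 (.pairs [10,11,0,24,18,27,13,20,3,19,12,26,1,28])
  (.pairs [18,19,12,26,0,27,13,20,3,11,10,24,1,28]))) (.offer 8 17 (.pairs
  [10,11,0,24,18,27,3,19,12,26,1,28,4,20,6,13]) (.pairs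
  [18,19,12,26,0,27,3,11,10,24,1,28,4,20,6,13]))) (.offer 12 26 (.offer 0 27 (.pairs
  [8,24,10,11,3,17,18,19,1,28,4,20,6,7,13,31]) (.offer 4 20 (.pairs
  [6,7,13,31,8,11,3,19,17,18,10,24,1,28]) (.pairs [6,13,8,11,3,19,17,18,10,24,1,28]))) (.offer 8 17
  (.pairs [10,11,0,24,18,27,3,19,1,28,4,7,13,31,6,20]) (.pairs
  [18,19,0,27,3,11,10,24,1,28,4,7,13,31,6,20]))))) (.offer 0 18 (.offer 8 24 (.offer 10 11 (.offer
  17 26 (.offer 15 22 (.pairs [12,13,7,31,21,28,1,19,4,20,6,27]) (.pairs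
  [20,21,7,28,1,19,4,12,13,31,6,27])) (.offer 15 22 (.pairs [12,13,7,31,21,28,1,19,4,20,6,27])
  (.pairs [20,21,7,28,1,19,4,12,13,31,6,27]))) (.offer 17 26 (.offer 15 22 (.pairs
  [12,13,7,31,21,28,4,20,6,27,3,19]) (.pairs [20,21,7,28,4,12,13,31,6,27,3,19])) (.offer 15 22
  (.pairs [12,13,7,31,21,28,4,20,6,27,3,19]) (.pairs [20,21,7,28,4,12,13,31,6,27,3,19])))) (.offer
  15 22 (.pairs [12,13,7,31,21,28,4,20,6,27,3,17,11,19,1,10]) (.pairs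
  [20,21,7,28,4,12,13,31,6,27,3,17,11,19,1,10]))) (.offer 17 19 (.offer 8 26 (.offer 10 11 (.offer
  3 24 (.offer 15 22 (.pairs [12,13,7,31,21,28,4,20,6,27]) (.pairs [20,21,7,28,4,12,13,31,6,27]))
  (.offer 15 22 (.pairs [12,13,7,31,21,28,4,20,6,27]) (.pairs [20,21,7,28,4,12,13,31,6,27])))
  (.offer 15 22 (.pairs [12,13,7,31,21,28,4,20,6,27]) (.pairs [20,21,7,28,4,12,13,31,6,27])))
  (.offer 15 22 (.pairs [12,13,7,31,21,28,4,20,6,27,3,10]) (.pairs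
  [20,21,7,28,4,12,13,31,6,27,3,10]))) (.offer 7 21 (.offer 15 31 (.pairs
  [12,13,22,29,8,10,1,28,4,20,6,27,3,11]) (.pairs [8,10,1,28,4,22,12,20,3,11,6,13])) (.offer 20 22
  (.pairs [8,10,1,28,4,12,13,15,6,27,3,11]) (.pairs [15,29,12,13,4,31,8,10,1,28,3,11])))))) (.offer
  6 22 (.offer 3 12 (.offer 10 11 (.offer 17 24 (.offer 18 19 (.pairs
  [8,26,0,27,13,20,4,5,21,29,28,31,7,14]) (.pairs [8,26,1,28,29,31,4,5,13,21,20,27,7,14])) (.pairs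
  [0,8,18,27,13,20,4,5,21,29,28,31,1,19,7,14])) (.offer 19 27 (.pairs
  [17,18,8,26,0,24,4,5,28,31,7,14,13,21]) (.pairs [0,18,13,20,8,24,17,26,4,5,21,29,28,31,7,14])))
  (.offer 5 26 (.offer 4 7 (.offer 20 28 (.pairs [13,27,14,15,0,18,17,19,8,24,10,11,21,29]) (.pairs
  [29,31,13,21,14,15,8,11,0,24,18,27,17,19,1,10])) (.offer 21 28 (.pairs
  [13,29,14,15,20,27,0,18,17,19,8,24,10,11]) (.pairs
  [29,31,8,11,0,24,18,27,17,19,1,10,13,20,14,15]))) (.offer 8 17 (.pairs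
  [10,11,0,24,18,27,13,20,14,15,4,28,29,31,1,19,7,21]) (.pairs
  [18,19,0,27,13,20,14,15,4,28,29,31,1,10,7,21])))) (.offer 15 29 (.offer 0 24 (.offer 18 27
  (.offer 17 19 (.pairs [8,26,10,11,13,14,4,31,3,12,20,28,7,21]) (.pairs
  [8,11,13,14,4,31,3,21,7,28,1,10,12,20,5,26])) (.offer 11 19 (.pairs
  [8,10,17,26,13,14,4,31,3,12,20,28,7,21]) (.pairs [13,14,4,31,3,21,7,28,1,10,12,20,5,26,8,17])))
  (.offer 3 21 (.offer 10 17 (.pairs [8,11,19,27,1,28,13,14,4,31,12,20,5,26]) (.pairs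
  [18,19,8,26,11,27,5,12,13,14,4,31,20,28])) (.offer 8 17 (.pairs
  [10,11,13,14,7,28,4,31,1,19,12,20,5,26]) (.pairs [18,19,13,14,7,28,4,31,1,10,12,20,5,26]))))
  (.offer 28 31 (.offer 8 17 (.offer 10 11 (.pairs [1,19,0,24,18,27,4,20,3,12,5,26,13,21,7,14])
  (.offer 0 24 (.offer 18 27 (.pairs [4,20,3,12,5,13,19,26,7,14]) (.offer 3 19 (.pairs
  [12,21,4,20,5,13,7,14]) (.pairs [4,20,5,13,12,26,7,14]))) (.pairs
  [4,20,3,12,19,27,5,26,13,21,7,14]))) (.offer 18 19 (.pairs [0,27,4,20,3,12,10,24,5,13,7,14])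
  (.offer 1 10 (.pairs [4,20,3,12,5,26,13,21,7,14,11,27]) (.offer 3 24 (.offer 12 21 (.pairs
  [4,20,5,26,11,27]) (.pairs [5,13,7,14,11,27])) (.pairs [4,20,5,13,12,26,7,14]))))) (.offer 4 13
  (.offer 8 17 (.pairs [10,11,0,24,18,27,3,19,12,21,5,26]) (.pairs
  [18,19,0,27,3,11,12,21,10,24,5,26])) (.offer 5 21 (.offer 8 17 (.pairs
  [10,11,0,24,18,27,3,19,12,26]) (.pairs [18,19,12,26,0,27,3,11,10,24])) (.offer 3 12 (.offer 0 24
  (.offer 18 27 (.pairs [17,19,8,26,10,11]) (.pairs [11,19,8,10,17,26])) (.offer 10 17 (.pairs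
  [8,11,19,27]) (.pairs [18,19,8,26,11,27]))) (.pairs [10,11,17,19,8,26,0,24,18,27])))))))))
  (.offer 23 30 (.offer 5 14 (.offer 11 18 (.offer 26 27 (.offer 8 17 (.offer 9 10 (.offer 12 19
  (.offer 15 22 (.pairs [7,31,4,6,20,28,2,29,13,21,0,1]) (.offer 20 21 (.pairs
  [4,28,2,29,6,7,13,31,0,1]) (.pairs [13,29,4,31,6,7,0,1]))) (.offer 22 29 (.pairs
  [20,21,4,6,13,31,7,15,0,1]) (.pairs [2,20,13,21,4,6,7,15,0,1]))) (.offer 12 19 (.offer 15 22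
  (.pairs [7,31,4,6,20,28,2,29,13,21,0,1]) (.offer 20 21 (.pairs [4,28,2,29,6,7,13,31,0,1]) (.pairs
  [13,29,4,31,6,7,0,1]))) (.offer 1 28 (.offer 22 29 (.pairs [20,21,0,2,4,6,13,31,7,15]) (.pairs
  [2,20,13,21,0,3,4,6,7,15])) (.offer 22 29 (.pairs [20,21,4,6,13,31,7,15]) (.pairs
  [2,20,13,21,4,6,7,15]))))) (.offer 1 9 (.offer 12 19 (.offer 15 22 (.pairs
  [7,31,4,6,20,28,2,29,0,3,10,24,13,21]) (.offer 20 21 (.pairs [4,28,2,29,0,3,6,7,10,24,13,31])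
  (.pairs [13,29,4,31,6,7,0,2,3,10]))) (.offer 10 28 (.offer 3 24 (.offer 0 2 (.offer 15 29 (.pairs
  [7,31,4,6,13,22,20,21]) (.pairs [13,21,20,22,4,31,6,7])) (.offer 20 29 (.pairs
  [21,22,4,6,13,31,7,15]) (.offer 13 21 (.offer 15 22 (.pairs [7,31,4,6]) (.pairs [4,31,6,7]))
  (.pairs [15,22,7,31,4,6])))) (.offer 22 29 (.pairs [20,21,4,6,13,31,7,15]) (.pairs
  [2,20,13,21,4,6,7,15]))) (.offer 22 29 (.pairs [20,21,0,2,4,6,13,31,7,15]) (.pairs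
  [2,20,13,21,0,3,4,6,7,15])))) (.offer 12 19 (.offer 15 22 (.pairs
  [7,31,4,6,20,28,2,29,13,21,3,10]) (.offer 20 21 (.pairs [4,28,2,29,6,7,13,31,3,10]) (.pairs
  [13,29,4,31,6,7,3,10]))) (.offer 22 29 (.pairs [20,21,4,6,13,31,7,15,3,10]) (.pairs
  [2,20,13,21,4,6,3,10,7,15]))))) (.offer 3 19 (.offer 20 29 (.offer 6 13 (.pairs
  [4,7,21,22,12,28,15,31,0,2,8,9,1,17,10,24]) (.pairs [21,22,4,31,12,28,7,15,0,2,8,9,1,17,10,24]))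
  (.offer 13 21 (.offer 15 22 (.pairs [7,31,4,6,0,2,8,9,1,17,10,24]) (.pairs
  [4,31,6,7,0,2,8,9,1,17,10,24])) (.pairs [15,22,7,31,4,6,0,2,8,9,1,17,10,24]))) (.offer 13 21
  (.offer 6 20 (.offer 4 7 (.pairs [22,31,15,29,8,9,1,17,10,28]) (.pairs
  [15,31,22,29,8,9,1,17,10,28])) (.offer 2 29 (.pairs [8,9,1,17,10,28,4,12,22,31,7,15]) (.offer 15
  22 (.pairs [7,31,8,9,1,17,10,28,4,12]) (.offer 4 31 (.offer 12 28 (.pairs [8,10,1,9]) (.offer 1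
  10 (.pairs [9,17]) (.pairs [8,9]))) (.pairs [8,9,1,17,10,28]))))) (.offer 20 22 (.pairs
  [2,29,6,7,15,31,8,9,1,17,10,28,4,12]) (.pairs [15,29,7,31,4,6,8,9,1,17,10,28]))))) (.offer 15 29
  (.offer 7 31 (.offer 4 6 (.offer 1 9 (.offer 10 26 (.pairs [19,28,12,20,21,22,0,2,3,17]) (.pairs
  [8,17,12,19,24,27,20,28,21,22,0,2])) (.offer 0 27 (.pairs [21,22,2,10,8,17,3,24,19,26,12,20])
  (.offer 24 26 (.pairs [3,10,21,22,12,20]) (.pairs [2,10,8,17,12,19,20,28,21,22])))) (.offer 17 26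
  (.pairs [1,9,0,27,13,20,21,22,2,3,10,24,19,28]) (.offer 2 10 (.pairs
  [12,19,24,27,0,9,1,3,13,20,21,22]) (.pairs [12,19,24,27,0,9,13,20,21,22,1,28])))) (.offer 4 13
  (.offer 1 9 (.offer 10 26 (.pairs [19,28,12,20,21,22,0,2,3,17]) (.pairs
  [8,17,12,19,24,27,20,28,21,22,0,2])) (.offer 0 27 (.pairs [21,22,2,10,8,17,3,24,19,26,12,20])
  (.offer 24 26 (.pairs [3,10,21,22,12,20]) (.pairs [2,10,8,17,12,19,20,28,21,22])))) (.offer 17 26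
  (.pairs [1,9,0,27,6,20,21,22,2,3,10,24,19,28]) (.offer 2 10 (.pairs
  [12,19,24,27,0,9,1,3,6,20,21,22]) (.pairs [12,19,24,27,0,9,6,20,21,22,1,28]))))) (.offer 13 21
  (.offer 12 19 (.offer 0 3 (.offer 9 27 (.pairs [1,17,8,26,2,10,6,7,20,28,4,22]) (.offer 6 20
  (.pairs [4,7,24,26,2,10,8,17,22,31]) (.pairs [24,26,4,28,2,10,8,17,22,31]))) (.offer 24 26
  (.pairs [10,17,1,9,6,7,20,27,4,28,22,31]) (.pairs [2,10,8,17,1,9,6,7,20,27,4,28,22,31]))) (.offer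
  17 26 (.offer 1 9 (.pairs [10,28,3,24,0,2,4,7,22,31,6,20]) (.pairs [0,27,6,20,4,7,22,31,3,10]))
  (.offer 2 10 (.pairs [24,27,0,9,1,3,6,20,4,7,22,31]) (.pairs [24,27,1,28,0,9,6,20,4,7,22,31]))))
  (.offer 20 22 (.offer 1 9 (.offer 10 26 (.pairs [19,28,4,12,6,7,0,2,3,17]) (.pairs
  [8,17,12,19,24,27,4,28,6,7,0,2])) (.offer 0 27 (.pairs [6,7,2,10,8,17,3,24,19,26,4,12]) (.offer
  24 26 (.pairs [6,7,3,10,4,12]) (.pairs [2,10,8,17,12,19,4,28,6,7])))) (.offer 17 26 (.pairs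
  [1,9,0,27,2,3,10,24,19,28,4,6]) (.offer 2 10 (.pairs [12,19,24,27,0,9,1,3,4,6]) (.pairs
  [12,19,24,27,0,9,1,28,4,6]))))))) (.offer 9 18 (.offer 1 17 (.offer 19 28 (.offer 15 22 (.pairs
  [12,13,7,31,0,2,8,10,3,11,20,29,6,27,24,26]) (.pairs
  [20,21,0,2,11,29,8,10,3,27,24,26,6,13,4,31])) (.offer 7 21 (.offer 15 31 (.pairs
  [12,13,22,29,4,20,6,27,24,26,2,11,0,3,8,10]) (.pairs [0,3,8,10,4,12,13,22,24,26,6,27,2,11]))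
  (.offer 20 22 (.pairs [4,12,13,15,6,27,24,26,0,3,8,10,2,11]) (.pairs
  [15,29,12,13,4,31,0,2,8,10,24,26])))) (.offer 8 26 (.offer 10 11 (.offer 3 24 (.offer 15 22
  (.pairs [12,13,7,31,21,28,4,20,6,27]) (.pairs [20,21,7,28,4,12,13,31,6,27])) (.offer 15 22
  (.pairs [12,13,7,31,21,28,4,20,6,27]) (.pairs [20,21,7,28,4,12,13,31,6,27]))) (.offer 15 22
  (.pairs [12,13,7,31,21,28,4,20,2,29,6,27,3,19]) (.pairs [20,21,7,28,2,29,4,12,13,31,6,27,3,19])))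
  (.offer 24 27 (.offer 3 10 (.offer 15 22 (.pairs [12,13,7,31,21,28,4,20,2,11]) (.pairs
  [20,21,7,28,4,12,13,31,2,11])) (.offer 15 22 (.pairs [12,13,7,31,21,28,4,20,2,11]) (.pairs
  [20,21,7,28,4,12,13,31,2,11]))) (.offer 7 21 (.offer 15 31 (.pairs
  [12,13,22,29,6,20,4,28,2,11,3,19]) (.pairs [3,19,6,13,4,22,12,28,2,11])) (.offer 20 22 (.pairs
  [6,13,12,15,4,28,3,19,2,11]) (.pairs [15,29,12,13,4,31,3,11])))))) (.offer 4 11 (.offer 20 21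
  (.offer 12 28 (.offer 13 15 (.offer 6 27 (.pairs [22,31,2,10,8,26,0,1,3,17]) (.offer 24 26
  (.pairs [22,31,10,17,0,1]) (.pairs [2,10,8,17,22,31,0,1]))) (.pairs
  [22,29,7,31,2,10,8,17,3,24,26,27,0,1])) (.offer 24 26 (.pairs
  [3,17,10,19,6,27,15,29,7,31,13,22,0,1]) (.pairs [2,10,8,17,1,19,0,3,6,27,15,29,7,31,13,22])))
  (.offer 7 28 (.offer 15 31 (.pairs [12,13,22,29,2,10,8,17,3,24,26,27,0,1]) (.pairs
  [13,22,2,10,8,17,3,24,26,27,0,1])) (.offer 10 26 (.pairs [1,19,12,13,22,31,15,29,17,24,0,2])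
  (.pairs [8,17,24,27,12,13,22,31,15,29,0,1])))) (.offer 2 10 (.offer 20 29 (.pairs
  [21,22,7,28,15,31,12,13,6,27,3,19,0,1,24,26,8,17]) (.pairs
  [15,22,12,13,7,31,21,28,0,1,8,17,3,19,24,26])) (.offer 19 28 (.offer 3 27 (.pairs
  [17,24,8,26,12,13,20,21,22,29,7,15]) (.pairs [24,26,8,17,12,13,6,20,21,22,15,29,7,31])) (.offer 7
  21 (.pairs [15,31,12,13,22,29,3,17,8,26,24,27,6,20]) (.offer 20 22 (.pairs
  [12,15,3,17,8,26,24,27,6,13]) (.pairs [15,29,12,13,3,17,8,26,24,27])))))))) (.offer 1 17 (.offer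
  10 18 (.offer 19 28 (.offer 5 13 (.offer 12 26 (.pairs [3,21,0,2,11,27,8,9,20,29,15,22,6,14,4,7])
  (.pairs [24,27,3,11,0,2,8,9,20,29,15,22,6,14,4,7])) (.offer 6 14 (.offer 20 27 (.pairs
  [0,2,11,29,8,9,15,22,4,31,3,12]) (.pairs [3,11,24,26,0,2,8,9,12,21,15,29,4,22])) (.offer 12 15
  (.pairs [3,21,0,2,11,27,8,9,24,26,20,29,4,22]) (.pairs [22,29,4,31,0,2,11,20,8,9,3,27,24,26]))))
  (.offer 29 31 (.offer 15 22 (.offer 12 21 (.pairs [13,14,4,20,2,11,0,3,8,9,6,27,24,26,5,7])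
  (.pairs [5,13,7,14,4,6,20,27,2,11,0,3,8,9,24,26])) (.offer 6 14 (.offer 12 21 (.pairs
  [4,20,5,7,2,11,0,3,8,9,13,27,24,26]) (.pairs [5,13,4,7,20,27,2,11,0,3,8,9,24,26])) (.offer 7 21
  (.pairs [0,3,8,9,2,11,4,12,24,26]) (.offer 3 12 (.pairs [0,2,5,13,11,20,8,9,24,26]) (.pairs
  [5,13,4,20,2,11,8,9,24,26]))))) (.offer 4 22 (.offer 12 20 (.pairs
  [3,21,0,2,7,14,5,6,13,15,8,9,24,26]) (.pairs [0,2,5,6,13,27,24,26,8,9,7,14])) (.pairs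
  [6,14,7,21,3,12,0,2,13,15,20,27,24,26,8,9])))) (.offer 4 11 (.offer 12 21 (.offer 20 28 (.offer
  13 14 (.offer 6 27 (.pairs [5,7,22,31,19,26,15,29,0,2]) (.pairs
  [0,9,24,26,22,31,2,3,5,19,15,29])) (.pairs [6,22,5,7,19,26,24,27,0,9,2,3,15,29])) (.offer 29 31
  (.offer 15 22 (.pairs [13,14,2,3,6,7,5,19,0,9,24,26]) (.pairs [6,14,5,7,19,26,24,27,0,9,2,3]))
  (.offer 13 22 (.pairs [14,15,2,3,6,7,5,19,0,9,24,26]) (.pairs [6,14,5,7,19,26,24,27,0,9,2,3]))))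
  (.offer 28 31 (.offer 7 14 (.pairs [5,6,13,29,15,22,20,27,0,9,2,3,24,26]) (.pairs
  [6,22,15,29,5,13,20,27,0,9,2,3,24,26])) (.offer 13 22 (.pairs [5,29,6,7,20,27,0,9,2,3,24,26])
  (.pairs [6,14,15,29,5,7,2,3,0,9,24,26])))) (.offer 12 21 (.offer 2 20 (.offer 0 3 (.pairs
  [9,27,24,26,5,19,13,14,6,22,15,29,28,31]) (.offer 19 27 (.pairs [5,26,13,14,6,22,15,29,28,31])
  (.pairs [24,26,13,14,6,22,15,29,28,31]))) (.offer 6 13 (.pairs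
  [14,22,15,29,28,31,5,19,3,27,0,9,24,26]) (.pairs [14,15,22,29,28,31,5,19,3,27,0,9,24,26])))
  (.offer 2 20 (.offer 0 3 (.pairs [9,27,24,26,6,14,7,28,29,31,5,13,15,22]) (.pairs
  [19,27,24,26,6,14,7,28,29,31,5,13,15,22])) (.offer 6 14 (.pairs
  [13,27,0,9,3,19,24,26,5,29,15,22,28,31]) (.pairs [7,28,29,31,5,13,15,22,0,9,3,19,24,26]))))))
  (.offer 8 26 (.offer 12 21 (.offer 28 31 (.offer 4 20 (.offer 11 18 (.pairs
  [9,10,3,24,19,27,5,7,13,14,6,22,15,29]) (.pairs [5,7,13,14,6,22,15,29,3,10,0,9])) (.offer 6 13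
  (.pairs [14,22,15,29,2,11,9,10,3,24,19,27,0,18]) (.pairs
  [14,15,22,29,2,11,9,10,3,24,19,27,0,18]))) (.offer 13 22 (.pairs
  [14,15,9,10,3,24,4,18,0,27,6,20,5,7,11,19,2,29]) (.pairs
  [6,14,15,29,9,10,3,24,4,18,5,7,0,27,11,19,2,20]))) (.offer 6 14 (.offer 13 29 (.offer 20 27
  (.pairs [5,7,9,10,3,24,11,18,4,22]) (.offer 9 10 (.pairs [0,18,4,11,5,7,3,19,22,31]) (.pairs
  [3,24,11,19,4,18,5,7,22,31]))) (.pairs [15,22,28,31,5,7,9,10,3,24,4,18,0,27,11,19,2,20])) (.offer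
  7 28 (.pairs [9,10,3,24,4,18,0,27,11,19,5,13,22,31,15,29,2,20]) (.offer 29 31 (.pairs
  [5,13,15,22,9,10,3,24,4,18,0,27,11,19,2,20]) (.pairs [9,10,3,24,4,11,13,22,19,27,0,18])))))
  (.offer 24 27 (.offer 3 10 (.offer 12 21 (.offer 5 19 (.offer 13 31 (.offer 14 15 (.pairs
  [6,22,4,7,11,18,20,28,2,29]) (.pairs [22,29,6,7,4,18,20,28,2,11])) (.offer 28 29 (.pairs
  [4,20,6,7,11,18,14,22]) (.pairs [15,22,6,14,4,7,11,18,2,20]))) (.offer 28 29 (.pairs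
  [4,20,11,18,13,15,22,31,6,14]) (.offer 15 22 (.pairs [13,14,4,18,2,11]) (.pairs
  [6,14,4,18,13,31,2,11])))) (.offer 22 29 (.pairs [6,14,7,28,4,5,11,18,13,31]) (.pairs
  [5,13,28,31,7,14,4,6,11,18,2,20]))) (.offer 2 18 (.offer 13 15 (.offer 4 28 (.pairs
  [22,31,6,14,5,7,12,19,21,29,11,20]) (.pairs [29,31,11,20,5,21,12,19,7,14,6,22])) (.offer 22 29
  (.pairs [6,14,5,19,4,7,21,28,12,20]) (.pairs [11,20,28,31,4,12,5,19,6,7,14,21]))) (.offer 4 11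
  (.offer 22 31 (.offer 6 14 (.pairs [5,7,15,29,12,19,20,28,13,21]) (.offer 15 29 (.pairs
  [12,13,5,19,20,28,7,21]) (.pairs [5,19,13,21,7,28,12,20]))) (.offer 28 29 (.pairs
  [12,20,5,19,6,7,14,21,13,15]) (.pairs [6,7,5,19,13,21,12,14]))) (.offer 5 12 (.pairs
  [6,14,13,21,7,28,29,31,15,22]) (.pairs [13,15,22,29,6,14,28,31,7,21]))))) (.offer 3 19 (.offer 12
  21 (.offer 20 29 (.offer 6 13 (.pairs [14,22,4,28,5,7,11,18,0,9,2,10]) (.pairs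
  [14,15,4,28,11,18,0,9,2,10,22,31])) (.offer 15 22 (.pairs [13,14,28,31,0,9,2,10,11,18,4,5])
  (.pairs [6,14,28,31,4,13,11,18,0,9,2,10,5,7]))) (.offer 5 7 (.offer 13 29 (.pairs
  [6,20,14,22,4,31,11,18,0,9,2,10]) (.pairs [15,22,28,31,6,14,0,9,2,10,11,20,4,18])) (.offer 14 28
  (.offer 6 22 (.pairs [13,20,0,9,2,10,11,29,4,18]) (.pairs [15,29,0,9,2,10,11,20,4,18,13,31]))
  (.offer 29 31 (.pairs [15,22,0,9,2,10,11,20,4,18,6,13]) (.pairs [0,9,2,10,11,18,6,20,4,13])))))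
  (.offer 5 12 (.offer 7 21 (.offer 4 6 (.offer 11 18 (.pairs [2,20,15,22,13,31,28,29]) (.pairs
  [0,9,2,10,15,22,13,31,28,29])) (.pairs [13,20,14,22,15,29,28,31,2,11,10,18,0,9])) (.offer 13 29
  (.pairs [6,20,14,22,4,31,11,18,0,9,2,10]) (.pairs [15,22,28,31,6,14,0,9,2,10,11,20,4,18])))
  (.offer 20 29 (.offer 6 13 (.pairs [14,22,4,28,11,18,0,9,2,10,7,21]) (.pairs
  [14,15,4,28,11,18,0,9,2,10,22,31,7,21])) (.offer 15 22 (.pairs [13,14,28,31,7,21,0,9,2,10,4,11])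
  (.pairs [6,14,28,31,4,13,11,18,0,9,2,10,7,21])))))))))

set_option maxRecDepth 100000 in
theorem strategy_check : strategy.check (List.range 32) critical = true := by
  decide +kernel

theorem pickerWins_tile :
    PickerWins {A : Finset ℕ | ∃ l ∈ critical, A = l.toFinset} (List.range 32).toFinset ∅ := by
  refine pickerWins_of_check strategy _ critical ∅ (Finset.disjoint_empty_right _) ?_ strategy_check
  rintro A ⟨l, hl, rfl⟩ -
  exact ⟨l, hl, fun v hv => List.mem_toFinset.mpr hv⟩

/-! ### The tiling of the plane -/

/-- The position in the plane of cell `n` of the tile with index `p`. -/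
def place (p : ℤ × ℤ) : ℕ ↪ ℤ × ℤ where
  toFun n := (8 * p.1 + (n % 8 : ℕ), 4 * p.2 + (n / 8 : ℕ))
  inj' m n h := by
    simp only [Prod.mk.injEq] at h
    omega

theorem place_apply (p : ℤ × ℤ) (n : ℕ) :
    place p n = (8 * p.1 + (n % 8 : ℕ), 4 * p.2 + (n / 8 : ℕ)) := rfl

/-- The index of the tile containing a given cell of the plane. -/
def tileOf (v : ℤ × ℤ) : ℤ × ℤ := (v.1 / 8, v.2 / 4)

/-- The cells of the tile with index `p`. -/
def tile (p : ℤ × ℤ) : Finset (ℤ × ℤ) := (List.range 32).toFinset.map (place p)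

/-- The critical sets of the tile with index `p`. -/
def tileSets (p : ℤ × ℤ) : Set (Finset (ℤ × ℤ)) :=
  Set.image (fun A => A.map (place p)) {A : Finset ℕ | ∃ l ∈ critical, A = l.toFinset}

theorem mem_tile {p v : ℤ × ℤ} : v ∈ tile p ↔ tileOf v = p := by
  obtain ⟨i, j⟩ := p
  obtain ⟨a, b⟩ := v
  simp only [tile, place_apply, tileOf, Finset.mem_map, List.mem_toFinset, List.mem_range,
    Prod.mk.injEq]
  constructor
  · rintro ⟨n, hn, h1, h2⟩
    omega
  · rintro ⟨h1, h2⟩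
    refine ⟨(8 * (b - 4 * j) + (a - 8 * i)).toNat, ?_, ?_, ?_⟩ <;> omega

theorem critical_lt : ∀ l ∈ critical, l ≠ [] ∧ ∀ n ∈ l, n < 32 := by decide +kernel

theorem subset_tile {p : ℤ × ℤ} {B : Finset (ℤ × ℤ)} (hB : B ∈ tileSets p) : B ⊆ tile p := by
  obtain ⟨_, ⟨l, hl, rfl⟩, rfl⟩ := hB
  refine Finset.map_subset_map.mpr fun n hn => ?_
  rw [List.mem_toFinset] at hn ⊢
  exact List.mem_range.mpr ((critical_lt l hl).2 n hn)

theorem nonempty_of_mem_tileSets {p : ℤ × ℤ} {B : Finset (ℤ × ℤ)} (hB : B ∈ tileSets p) :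
    B.Nonempty := by
  obtain ⟨_, ⟨l, hl, rfl⟩, rfl⟩ := hB
  exact Finset.map_nonempty.mpr (List.toFinset_nonempty_iff l |>.mpr (critical_lt l hl).1)

theorem disjoint_tile {p q : ℤ × ℤ} (h : p ≠ q) : Disjoint (tile p) (tile q) := by
  rw [Finset.disjoint_left]
  intro v hp hq
  exact h ((mem_tile.mp hp).symm.trans (mem_tile.mp hq))

theorem pickerWins_tiles (T : Finset (ℤ × ℤ)) :
    PickerWins {B | ∃ p ∈ T, B ∈ tileSets p} (T.biUnion tile) ∅ := by
  induction T using Finset.induction_on with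
  | empty => exact .endEven ∅ (by simp)
  | insert p T hp ih =>
    have hd : Disjoint (tile p) (T.biUnion tile) := by
      rw [Finset.disjoint_biUnion_right]
      exact fun q hq => disjoint_tile fun h => hp (h ▸ hq)
    have h1 : PickerWins (tileSets p) (tile p) ∅ := pickerWins_tile.map (place p)
    have := pickerWins_union h1 ih (by simpa using hd)
      (fun B hB => hd.mono_left (subset_tile hB)) (by
        rintro B ⟨q, hq, hB⟩
        rw [Finset.union_empty]
        have hqp : q ≠ p := fun h => hp (h ▸ hq)
        exact (disjoint_tile hqp).mono_left (subset_tile hB))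
    rw [Finset.biUnion_insert]
    refine this.mono ?_ _ _ Finset.subset_union_left subset_rfl
    rintro B ⟨q, hq, hB⟩
    rcases Finset.mem_insert.mp hq with rfl | hq
    · exact ⟨B, .inl hB, subset_rfl⟩
    · exact ⟨B, .inr ⟨q, hq, hB⟩, subset_rfl⟩

/-- A line of seven cells starting in the tile with index `(0, 0)` contains a critical set of that
tile or of a nearby one; `n % 8` and `n / 8` are the column and the row of cell `n`. -/
theorem covering : ∀ d ∈ ([(1, 0), (0, 1), (1, 1), (1, -1)] : List (ℤ × ℤ)),
    ∀ a ∈ List.range 8, ∀ b ∈ List.range 4,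
    ∃ i ∈ ([0, 1] : List ℤ), ∃ j ∈ ([0, 1, 2, -1, -2] : List ℤ), ∃ l ∈ critical, ∀ n ∈ l,
    ∃ k ∈ List.range 7, (a : ℤ) + k * d.1 = 8 * i + (n % 8 : ℕ) ∧
      (b : ℤ) + k * d.2 = 4 * j + (n / 8 : ℕ) := by
  decide +kernel

theorem exists_critical_subset {A : Finset (ℤ × ℤ)} (hA : SevenInARow A) :
    ∃ p, ∃ B ∈ tileSets p, B ⊆ A := by
  obtain ⟨⟨x, y⟩, d, hd, rfl⟩ := hA
  obtain ⟨i, -, j, -, l, hl, h⟩ := covering d (by simpa using hd)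
    (x % 8).toNat (List.mem_range.mpr (by omega)) (y % 4).toNat (List.mem_range.mpr (by omega))
  refine ⟨(x / 8 + i, y / 4 + j), _, ⟨_, ⟨l, hl, rfl⟩, rfl⟩, fun v hv => ?_⟩
  obtain ⟨n, hn, rfl⟩ := Finset.mem_map.mp hv
  obtain ⟨k, hk, h1, h2⟩ := h n (List.mem_toFinset.mp hn)
  refine Finset.mem_image.mpr ⟨k, Finset.mem_range.mpr (List.mem_range.mp hk), ?_⟩
  simp only [place_apply, Prod.mk.injEq]
  generalize (k : ℤ) * d.1 = r at *
  generalize (k : ℤ) * d.2 = s at *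
  omega

/-- Picker wins the Chooser-Picker 7-in-a-row game on every finite subset
`S` of ℤ², the winning sets being the 7-in-a-row sets entirely contained in `S`. -/
theorem picker_wins_CP_seven_in_a_row (S : Finset (ℤ × ℤ)) :
    PickerWinsGame S {A : Finset (ℤ × ℤ) | SevenInARow A ∧ A ⊆ S} := by
  -- The board is enlarged to the union of all tiles that it meets.
  refine (pickerWins_tiles (S.image tileOf)).mono ?_ S ∅ ?_ subset_rfl
  · rintro A ⟨hA, hAS⟩
    obtain ⟨p, B, hB, hBA⟩ := exists_critical_subset hA
    obtain ⟨v, hv⟩ := nonempty_of_mem_tileSets hB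
    refine ⟨B, ⟨p, ?_, hB⟩, hBA⟩
    rw [← mem_tile.mp (subset_tile hB hv)]
    exact Finset.mem_image_of_mem _ (hAS (hBA hv))
  · intro v hv
    rw [Finset.union_empty]
    exact Finset.mem_biUnion.mpr ⟨tileOf v, Finset.mem_image_of_mem _ hv, mem_tile.mpr rfl⟩
end

section
/- Let (V, F) be a finite hypergraph that contains a two-element winning set {x, y} ∈ F with x ≠ y. If Picker has a winning strategy in the Chooser-Picker game on (V, F), then Picker has a winning strategy whose first move is to offer the pair {x, y}. -/
theorem PickerWins.not_subset {α : Type*} [DecidableEq α] {F : Set (Finset α)}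
    {rem ch : Finset α} (h : PickerWins F rem ch) {A : Finset α} (hA : A ∈ F) : ¬ A ⊆ ch := by
  induction h with
  | endEven ch hw => exact hw A hA
  | endOdd x ch hw => exact fun hs => hw A hA (hs.trans (Finset.subset_insert x ch))
  | step rem ch x y hx hy hxy h1 h2 ih1 ih2 =>
    exact fun hs => ih1 (hs.trans (Finset.subset_insert x ch))

/-- Chooser can secure any single unselected vertex `z`, so in a position won by Picker no winning
set is one unselected vertex away from being completed. -/
theorem PickerWins.not_subset_insert {α : Type*} [DecidableEq α] {F : Set (Finset α)}
    {rem ch : Finset α} (h : PickerWins F rem ch) {A : Finset α} (hA : A ∈ F)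
    {z : α} (hz : z ∈ rem) : ¬ A ⊆ insert z ch := by
  induction h with
  | endEven ch hw => simp at hz
  | endOdd x ch hw =>
    obtain rfl := Finset.mem_singleton.mp hz
    exact hw A hA
  | step rem ch a b ha hb hab h1 h2 ih1 ih2 =>
    by_cases hza : z = a
    · subst hza
      exact h1.not_subset hA
    by_cases hzb : z = b
    · subst hzb
      exact h2.not_subset hA
    intro hs
    refine ih1 (by simp [hza, hzb, hz]) (hs.trans ?_)
    exact Finset.insert_subset_insert z (Finset.subset_insert a ch)

/-- The main theorem at an arbitrary position of the game. -/
theorem PickerWins.offer_pair {α : Type*} [DecidableEq α] {F : Set (Finset α)}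
    {x y : α} (hxy : x ≠ y) (hpair : ({x, y} : Finset α) ∈ F)
    {rem ch : Finset α} (h : PickerWins F rem ch) (hx : x ∈ rem) (hy : y ∈ rem) :
    PickerWins F ((rem.erase x).erase y) (insert x ch) ∧
    PickerWins F ((rem.erase x).erase y) (insert y ch) := by
  induction h with
  | endEven ch hw => simp at hx
  | endOdd z ch hw =>
    rw [Finset.mem_singleton] at hx hy
    exact absurd (hx.trans hy.symm) hxy
  | step rem ch a b ha hb hab h1 h2 ih1 ih2 =>
    -- Chooser holding `x` or `y` while the other one is unselected contradicts Picker's win.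
    have key : ∀ {r : Finset α}, (PickerWins F r (insert x ch) → y ∉ r) ∧
        (PickerWins F r (insert y ch) → x ∉ r) := by
      intro r
      refine ⟨fun h hm => h.not_subset_insert hpair hm ?_,
        fun h hm => h.not_subset_insert hpair hm ?_⟩ <;> intro v <;> simp <;> tauto
    by_cases hax : a = x
    · subst hax
      obtain rfl : y = b := by simpa [hy, hxy.symm] using key.1 h1
      exact ⟨h1, h2⟩
    by_cases hay : a = y
    · subst hay
      obtain rfl : x = b := by simpa [hx, hxy] using key.2 h1
      rw [Finset.erase_right_comm]
      exact ⟨h2, h1⟩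
    have hbx : b ≠ x := by
      rintro rfl
      exact key.1 h2 (by simp [hy, hxy.symm, Ne.symm hay])
    have hby : b ≠ y := by
      rintro rfl
      exact key.2 h2 (by simp [hx, hxy, Ne.symm hax])
    -- The rounds on the disjoint pairs `{a, b}` and `{x, y}` can be played in either order.
    have hx' : x ∈ (rem.erase a).erase b := by simp [hx, hbx.symm, Ne.symm hax]
    have hy' : y ∈ (rem.erase a).erase b := by simp [hy, hby.symm, Ne.symm hay]
    have hrem : (((rem.erase a).erase b).erase x).erase y
        = (((rem.erase x).erase y).erase a).erase b := by
      ext v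
      simp only [Finset.mem_erase]
      tauto
    obtain ⟨hax1, hay1⟩ := ih1 hx' hy'
    obtain ⟨hbx1, hby1⟩ := ih2 hx' hy'
    rw [hrem, Finset.insert_comm] at hax1 hay1 hbx1 hby1
    have ha' : a ∈ (rem.erase x).erase y := by simp [ha, hax, hay]
    have hb' : b ∈ (rem.erase x).erase y := by simp [hb, hbx, hby]
    exact ⟨.step _ _ a b ha' hb' hab hax1 hbx1, .step _ _ a b ha' hb' hab hay1 hby1⟩


/-- If the finite hypergraph `(V, F)` contains a two-element winning set
`{x, y} ∈ F` and Picker wins the Chooser-Picker game on `(V, F)`, then Picker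
has a winning strategy whose first move is to offer the pair `{x, y}`:
whichever of `x`, `y` Chooser keeps, Picker wins the remaining game. -/
theorem picker_can_start_with_pair {α : Type*} [DecidableEq α]
    (V : Finset α) (F : Set (Finset α)) (hF : ∀ A ∈ F, A ⊆ V)
    (x y : α) (hxy : x ≠ y) (hx : x ∈ V) (hy : y ∈ V)
    (hpair : ({x, y} : Finset α) ∈ F)
    (hwin : PickerWinsGame V F) :
    PickerWins F ((V.erase x).erase y) {x} ∧
    PickerWins F ((V.erase x).erase y) {y} := by
  simpa using PickerWins.offer_pair hxy hpair hwin hx hy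
end

section
/- Let (V, F) be a finite hypergraph and X ⊆ V. If Picker has a winning strategy in the Chooser-Picker game on (V, F), then Picker has a winning strategy in the Chooser-Picker game on the hypergraph (V \ X, F(X)), where F(X) = {A ∈ F : A ∩ X = ∅}. -/
/-- A vertex `y` credited to Chooser may be put back on the board without harm to Picker. Here `c`
is the set Chooser is pretended to hold and `ch` the set he really holds. -/
theorem PickerWins.release {α : Type*} [DecidableEq α] {F : Set (Finset α)} {rem c : Finset α}
    (h : PickerWins F rem c) :
    ∀ (ch : Finset α) (y : α), insert y ch ⊆ c → y ∉ rem → PickerWins F (insert y rem) ch := by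
  induction h with
  | endEven c hw =>
    intro ch y hc _
    exact PickerWins.endOdd y ch fun A hA hAc => hw A hA (hAc.trans hc)
  | endOdd x c hw =>
    intro ch y hc hy
    have hyx : y ≠ x := by simpa using hy
    have he : ((insert y {x} : Finset α).erase y).erase x = ∅ := by
      ext a; simp; tauto
    refine PickerWins.step _ _ y x (by simp) (by simp) hyx ?_ ?_ <;> rw [he]
    · exact PickerWins.endEven _ fun A hA hAc =>
        hw A hA (hAc.trans (hc.trans (Finset.subset_insert x c)))
    · exact PickerWins.endEven _ fun A hA hAc => hw A hA (hAc.trans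
        (Finset.insert_subset_insert x ((Finset.subset_insert y ch).trans hc)))
  | step rem c a b ha hb hab _ _ ih1 ih2 =>
    intro ch y hc hy
    have hya : y ≠ a := by rintro rfl; exact hy ha
    have hyb : y ≠ b := by rintro rfl; exact hy hb
    have he : ((insert y rem).erase a).erase b = insert y ((rem.erase a).erase b) := by
      rw [Finset.erase_insert_of_ne hya, Finset.erase_insert_of_ne hyb]
    have hy' : y ∉ (rem.erase a).erase b := by simp [hy]
    refine PickerWins.step _ _ a b (by simp [ha]) (by simp [hb]) hab ?_ ?_ <;> rw [he]
    · refine ih1 _ y ?_ hy'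
      rw [Finset.insert_comm]
      exact Finset.insert_subset_insert a hc
    · refine ih2 _ y ?_ hy'
      rw [Finset.insert_comm]
      exact Finset.insert_subset_insert b hc

/-- Deleting an unselected vertex from the board does not hurt Picker. -/
theorem PickerWins.erase {α : Type*} [DecidableEq α] {F : Set (Finset α)} {rem ch : Finset α}
    (h : PickerWins F rem ch) (x : α) : PickerWins F (rem.erase x) ch := by
  induction h with
  | endEven ch hw => simpa using PickerWins.endEven ch hw
  | endOdd z ch hw =>
    by_cases hxz : x = z
    · subst hxz
      rw [Finset.erase_singleton]
      exact PickerWins.endEven ch fun A hA hAc =>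
        hw A hA (hAc.trans (Finset.subset_insert x ch))
    · rw [Finset.erase_eq_of_notMem (by simpa using hxz)]
      exact PickerWins.endOdd z ch hw
  | step rem ch a b ha hb hab h1 h2 ih1 ih2 =>
    by_cases hxa : x = a
    · subst hxa
      have := h2.release ch b subset_rfl (by simp)
      rwa [Finset.insert_erase (Finset.mem_erase.2 ⟨hab.symm, hb⟩)] at this
    by_cases hxb : x = b
    · subst hxb
      have := h1.release ch a subset_rfl (by simp)
      rwa [Finset.erase_right_comm, Finset.insert_erase (Finset.mem_erase.2 ⟨hab, ha⟩)] at this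
    have he : ((rem.erase x).erase a).erase b = ((rem.erase a).erase b).erase x := by
      rw [Finset.erase_right_comm (a := x), Finset.erase_right_comm (a := x)]
    refine PickerWins.step _ _ a b (Finset.mem_erase.2 ⟨Ne.symm hxa, ha⟩)
      (Finset.mem_erase.2 ⟨Ne.symm hxb, hb⟩) hab ?_ ?_ <;> rw [he]
    · exact ih1
    · exact ih2

theorem PickerWins.mono_s2 {α : Type*} [DecidableEq α] {F G : Set (Finset α)} (hGF : G ⊆ F)
    {rem ch : Finset α} (h : PickerWins F rem ch) : PickerWins G rem ch := by
  induction h with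
  | endEven ch hw => exact PickerWins.endEven ch fun A hA => hw A (hGF hA)
  | endOdd z ch hw => exact PickerWins.endOdd z ch fun A hA => hw A (hGF hA)
  | step rem ch a b ha hb hab _ _ ih1 ih2 => exact PickerWins.step rem ch a b ha hb hab ih1 ih2

theorem PickerWins.sdiff {α : Type*} [DecidableEq α] {F : Set (Finset α)} {rem ch : Finset α}
    (h : PickerWins F rem ch) (X : Finset α) : PickerWins F (rem \ X) ch := by
  induction X using Finset.induction_on with
  | empty => simpa using h
  | insert x X _ ih =>
    rw [Finset.sdiff_insert]
    exact ih.erase x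

/-- If Picker wins the Chooser-Picker game on `(V, F)`, then Picker also wins
it on the induced sub-hypergraph `(V \ X, F(X))` where
`F(X) = {A ∈ F : A ∩ X = ∅}`. -/
theorem picker_wins_induced_subhypergraph {α : Type*} [DecidableEq α]
    (V : Finset α) (F : Set (Finset α)) (hF : ∀ A ∈ F, A ⊆ V)
    (X : Finset α) (hX : X ⊆ V)
    (hwin : PickerWinsGame V F) :
    PickerWinsGame (V \ X) {A ∈ F | A ∩ X = ∅} :=
  (PickerWins.sdiff hwin X).mono_s2 fun _ hA => hA.1
end

section
/- Let (V, F) be a finite hypergraph and let C, P and C', P' be two pairs of disjoint subsets of V describing partially played positions, with the same set of filled squares C ∪ P = C' ∪ P' and with C' ⊆ C (hence P ⊆ P'). If Picker wins the Chooser-Picker game played from the position (C, P), i.e. on the residual hypergraph (V \ (C ∪ P), {A \ C : A ∈ F, A ∩ P = ∅}), then Picker also wins the Chooser-Picker game played from the less dangerous position (C', P'), i.e. on the residual hypergraph (V \ (C' ∪ P'), {A \ C' : A ∈ F, A ∩ P' = ∅}). -/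
/-- Picker's strategy for `F` also wins for `G` when each member of `G` contains a member
of `F`. -/
lemma PickerWins.of_refines {α : Type*} [DecidableEq α] {F G : Set (Finset α)}
    (hGF : ∀ B ∈ G, ∃ A ∈ F, A ⊆ B) {rem ch : Finset α} (h : PickerWins F rem ch) :
    PickerWins G rem ch := by
  have key : ∀ S : Finset α, (∀ A ∈ F, ¬ A ⊆ S) → ∀ B ∈ G, ¬ B ⊆ S := by
    intro S hS B hB hBS
    obtain ⟨A, hA, hAB⟩ := hGF B hB
    exact hS A hA (hAB.trans hBS)
  induction h with
  | endEven ch hw => exact .endEven ch (key _ hw)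
  | endOdd x ch hw => exact .endOdd x ch (key _ hw)
  | step rem ch x y hx hy hxy _ _ ih1 ih2 => exact .step rem ch x y hx hy hxy ih1 ih2

/-- If Picker wins the Chooser-Picker game from the position `(C, P)` (Chooser
owns `C`, Picker owns `P`), then Picker also wins from any less dangerous
position `(C', P')` with the same filled squares `C ∪ P = C' ∪ P'` and
`C' ⊆ C`.  The game from a position `(C, P)` is played on the residual
hypergraph `(V \ (C ∪ P), {A \ C : A ∈ F, A ∩ P = ∅})`. -/
theorem picker_wins_less_dangerous {α : Type*} [DecidableEq α]
    (V : Finset α) (F : Set (Finset α)) (hF : ∀ A ∈ F, A ⊆ V)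
    (C P C' P' : Finset α)
    (hCV : C ⊆ V) (hPV : P ⊆ V) (hCP : Disjoint C P)
    (hC'V : C' ⊆ V) (hP'V : P' ⊆ V) (hC'P' : Disjoint C' P')
    (hfill : C ∪ P = C' ∪ P') (hCC' : C' ⊆ C)
    (hwin : PickerWinsGame (V \ (C ∪ P)) {B | ∃ A ∈ F, A ∩ P = ∅ ∧ B = A \ C}) :
    PickerWinsGame (V \ (C' ∪ P')) {B | ∃ A ∈ F, A ∩ P' = ∅ ∧ B = A \ C'} := by
  rw [← hfill]
  refine PickerWins.of_refines ?_ hwin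
  rintro _ ⟨A, hA, hAP', rfl⟩
  have hPP' : P ⊆ P' := by
    intro x hx
    have hx' : x ∈ C' ∪ P' := hfill ▸ Finset.mem_union_right C hx
    rcases Finset.mem_union.mp hx' with h | h
    · exact absurd hx (Finset.disjoint_left.mp hCP (hCC' h))
    · exact h
  refine ⟨A \ C, ⟨A, hA, ?_, rfl⟩, Finset.sdiff_subset_sdiff subset_rfl hCC'⟩
  exact Finset.subset_empty.mp (hAP' ▸ Finset.inter_subset_inter_left hPP')
end

section
/- Let (V, F) be a finite hypergraph and suppose V is partitioned into finitely many pairwise disjoint nonempty sets V₁, …, Vₙ such that every winning set A ∈ F is entirely contained in some Vᵢ. If for every i Picker has a winning strategy in the Chooser-Picker game on the sub-hypergraph (Vᵢ, {A ∈ F : A ⊆ Vᵢ}), then Picker has a winning strategy in the Chooser-Picker game on (V, F). -/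
/-- If Chooser would lose even with all remaining vertices, Picker wins by arbitrary play. -/
lemma pickerWins_of_no_subset {α : Type*} [DecidableEq α] (F : Set (Finset α))
    (R c : Finset α) (h : ∀ A ∈ F, ¬ A ⊆ R ∪ c) : PickerWins F R c := by
  induction R using Finset.strongInduction generalizing c with
  | H R ih =>
    rcases R.eq_empty_or_nonempty with rfl | hR
    · exact .endEven c (by simpa using h)
    obtain ⟨x, rfl⟩ | ⟨x, hx, y, hy, hxy⟩ := hR.exists_eq_singleton_or_nontrivial
    · exact .endOdd x c (by simpa only [Finset.singleton_union] using h)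
    · have hss : (R.erase x).erase y ⊂ R :=
        (Finset.erase_subset _ _).trans_ssubset (Finset.erase_ssubset hx)
      refine .step R c x y hx hy hxy (ih _ hss _ ?_) (ih _ hss _ ?_) <;>
      · refine fun A hA hAs => h A hA (hAs.trans ?_)
        intro z hz
        simp only [Finset.mem_coe] at hx hy
        grind

/-- Playing a position `(R, c)` that Picker wins for `F₁` inside a larger board: if Picker wins the
larger game for `F` from every outcome `(L, E)` of the small one in which `L ∪ E` contains no set
of `F₁`, then she wins the larger game. Here `L` is the set of vertices left over in the small
game and `E` is Chooser's share of it. -/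
lemma PickerWins.extend_board {α : Type*} [DecidableEq α] {F₁ : Set (Finset α)} {R c : Finset α}
    (h : PickerWins F₁ R c) (F : Set (Finset α)) (S D : Finset α) (hRS : Disjoint R S)
    (hcont : ∀ L E : Finset α, L ⊆ R → E ⊆ R ∪ c → (∀ A ∈ F₁, ¬ A ⊆ L ∪ E) →
      PickerWins F (L ∪ S) (D ∪ E)) :
    PickerWins F (R ∪ S) (D ∪ c) := by
  induction h with
  | endEven c hw => exact hcont ∅ c (by simp) (by simp) (by simpa using hw)
  | endOdd x c hw =>
    exact hcont {x} c (by simp) Finset.subset_union_right (by simpa only [Finset.singleton_union] using hw)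
  | step R c x y hx hy hxy _ _ ih1 ih2 =>
    have hsub : (R.erase x).erase y ⊆ R := (Finset.erase_subset _ _).trans (Finset.erase_subset _ _)
    have hxS : x ∉ S := Finset.disjoint_left.mp hRS hx
    have hyS : y ∉ S := Finset.disjoint_left.mp hRS hy
    have hrem : ((R ∪ S).erase x).erase y = (R.erase x).erase y ∪ S := by
      ext z; grind
    refine .step _ _ x y (Finset.mem_union_left _ hx) (Finset.mem_union_left _ hy) hxy ?_ ?_
    · rw [hrem, ← Finset.union_insert]
      refine ih1 (hRS.mono_left hsub) fun L E hL hE hg => hcont L E (hL.trans hsub) ?_ hg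
      intro z hz; have := hE hz; grind
    · rw [hrem, ← Finset.union_insert]
      refine ih2 (hRS.mono_left hsub) fun L E hL hE hg => hcont L E (hL.trans hsub) ?_ hg
      intro z hz; have := hE hz; grind

/-- Picker wins when the parts indexed by `s` are untouched and each of the others has been played
safely, `L` collecting the left-over vertices and `D` those taken by Chooser. -/
lemma pickerWins_union_parts {α ι : Type*} [DecidableEq α] [DecidableEq ι]
    (F : Set (Finset α)) (Vi : ι → Finset α)
    (hdisj : ∀ i j, i ≠ j → Disjoint (Vi i) (Vi j))
    (hin : ∀ A ∈ F, ∃ i, A ⊆ Vi i)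
    (hwin : ∀ i, PickerWins {A ∈ F | A ⊆ Vi i} (Vi i) ∅)
    (s : Finset ι) (L D : Finset α)
    (hL : ∀ i ∈ s, Disjoint (Vi i) L) (hD : ∀ i ∈ s, Disjoint (Vi i) D)
    (hsafe : ∀ i, i ∉ s → ∀ A ∈ F, A ⊆ Vi i → ¬ A ⊆ L ∪ D) :
    PickerWins F (L ∪ s.biUnion Vi) D := by
  induction s using Finset.induction_on generalizing L D with
  | empty =>
    rw [Finset.biUnion_empty, Finset.union_empty]
    refine pickerWins_of_no_subset F L D fun A hA => ?_
    obtain ⟨i, hi⟩ := hin A hA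
    exact hsafe i (Finset.notMem_empty i) A hA hi
  | insert i s his ih =>
    have key : PickerWins F (Vi i ∪ (L ∪ s.biUnion Vi)) (D ∪ ∅) := by
      refine (hwin i).extend_board F _ D ?_ fun L' E hL' hE hg => ?_
      · rw [Finset.disjoint_union_right, Finset.disjoint_biUnion_right]
        exact ⟨hL i (Finset.mem_insert_self i s),
          fun j hj => hdisj i j (ne_of_mem_of_not_mem hj his).symm⟩
      · rw [Finset.union_empty] at hE
        rw [← Finset.union_assoc]
        have hsij : ∀ j ∈ s, Disjoint (Vi j) (Vi i) :=
          fun j hj => hdisj j i (ne_of_mem_of_not_mem hj his)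
        refine ih (L' ∪ L) (D ∪ E) (fun j hj => ?_) (fun j hj => ?_) fun j hj A hA hAj hsub => ?_
        · exact Finset.disjoint_union_right.mpr
            ⟨(hsij j hj).mono_right hL', hL j (Finset.mem_insert_of_mem hj)⟩
        · exact Finset.disjoint_union_right.mpr
            ⟨hD j (Finset.mem_insert_of_mem hj), (hsij j hj).mono_right hE⟩
        · by_cases hji : j = i
          · subst hji
            refine hg A ⟨hA, hAj⟩ fun z hz => ?_
            have h1 := Finset.disjoint_left.mp (hL j (Finset.mem_insert_self j s)) (hAj hz)
            have h2 := Finset.disjoint_left.mp (hD j (Finset.mem_insert_self j s)) (hAj hz)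
            have h3 := hsub hz
            grind
          · refine hsafe j (by simp [hji, hj]) A hA hAj fun z hz => ?_
            have h1 := Finset.disjoint_left.mp (hdisj j i hji) (hAj hz)
            have h2 : z ∉ L' := fun h => h1 (hL' h)
            have h3 : z ∉ E := fun h => h1 (hE h)
            have h4 := hsub hz
            grind
    rw [Finset.union_empty] at key
    rwa [Finset.biUnion_insert, Finset.union_left_comm]

/-- If `V` is partitioned into pairwise disjoint nonempty sets `V₁, …, Vₙ`
such that every winning set lies inside some part, and Picker wins the
Chooser-Picker game on each part with the winning sets contained in it,
then Picker wins the game on `(V, F)`. -/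
theorem picker_wins_of_partition {α : Type*} [DecidableEq α]
    (V : Finset α) (F : Set (Finset α)) (hF : ∀ A ∈ F, A ⊆ V)
    (n : ℕ) (Vi : Fin n → Finset α)
    (hne : ∀ i, (Vi i).Nonempty)
    (hdisj : ∀ i j, i ≠ j → Disjoint (Vi i) (Vi j))
    (hunion : Finset.univ.biUnion Vi = V)
    (hin : ∀ A ∈ F, ∃ i, A ⊆ Vi i)
    (hwin : ∀ i, PickerWinsGame (Vi i) {A ∈ F | A ⊆ Vi i}) :
    PickerWinsGame V F := by
  have h := pickerWins_union_parts F Vi hdisj hin hwin Finset.univ ∅ ∅ (by simp) (by simp) (by simp)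
  rwa [Finset.empty_union, hunion] at h
end
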